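/- For s ≥ 1, let E(x,y) = Σ e_{n,k} y^k x^n where e_{n,k} is the number of s-ary paths of length n with exactly k exterior down steps. Then E satisfies E = 1 + x·(y·E^s + (1-y)/(1-x))·E as formal power series. Moreover, E(x,y) = P(x·y, y^{-1}) where P is the pyramid-weight generating function. -/

import Mathlib

/-- An `s`-ary path of length `n`, encoded as a list of booleans where `true` is an up
step `(1,1)` and `false` is a (grand) down step `(1,-s)`; the path goes from `(0,0)` to
`((s+1)n, 0)` and never passes below the x-axis. -/
def IsSAryPath (s n : ℕ) (p : List Bool) : Prop :=
  p.length = (s + 1) * n ∧ p.count false = n ∧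
  ∀ i, s * (p.take i).count false ≤ (p.take i).count true

/-- The section of `p` from `a` to `b` (inclusive) is a pyramid `U^{sh} D^h` of height
`h`: `s·h` up steps followed immediately by `h` down steps. -/
def IsPyramidSecS (s : ℕ) (p : List Bool) (a b : ℕ) : Prop :=
  a ≤ b ∧ b < p.length ∧ b - a + 1 = (s + 1) * ((b - a + 1) / (s + 1)) ∧
  (p.drop a).take (b - a + 1) =
    List.replicate (s * ((b - a + 1) / (s + 1))) true ++
      List.replicate ((b - a + 1) / (s + 1)) false

/-- The pyramid section from `a` to `b` is maximal: not contained in a higher pyramid. -/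
def MaximalPyramidSecS (s : ℕ) (p : List Bool) (a b : ℕ) : Prop :=
  IsPyramidSecS s p a b ∧
    ¬ (s ≤ a ∧ b + 1 < p.length ∧ IsPyramidSecS s p (a - s) (b + 1))

open scoped Classical in
/-- The pyramid weight of an `s`-ary path `p`: the sum of the heights of its maximal
pyramids. -/
noncomputable def pyramidWeightS (s : ℕ) (p : List Bool) : ℕ :=
  ∑ q ∈ (Finset.range p.length ×ˢ Finset.range p.length).filter
      (fun q : ℕ × ℕ => MaximalPyramidSecS s p q.1 q.2),
    (q.2 - q.1 + 1) / (s + 1)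

open scoped Classical in
/-- The number of exterior down steps of `p`: down steps belonging to no pyramid. -/
noncomputable def exteriorDownSteps (s : ℕ) (p : List Bool) : ℕ :=
  ((Finset.range p.length).filter
    (fun j => p.getD j true = false ∧
      ¬ ∃ a ∈ Finset.range p.length, ∃ b ∈ Finset.range p.length,
        a ≤ j ∧ j ≤ b ∧ IsPyramidSecS s p a b)).card

open MvPowerSeries in
/-- `Es s = Σ e_{n,k} y^k x^n` where `e_{n,k}` is the number of `s`-ary paths of
length `n` with exactly `k` exterior down steps; `X 0` is `x` and `X 1` is `y`. -/
noncomputable def Es (s : ℕ) : MvPowerSeries (Fin 2) ℚ :=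
  fun d =>
    (Nat.card {p : List Bool // IsSAryPath s (d 0) p ∧ exteriorDownSteps s p = d 1} : ℚ)

/-- `PyramidAtPeak s p c h`: the `s * h` steps of `p` before position `c` are up steps and the
`h ≥ 1` steps from position `c` on are down steps. -/
def PyramidAtPeak (s : ℕ) (p : List Bool) (c h : ℕ) : Prop :=
  0 < h ∧ s * h ≤ c ∧ c + h ≤ p.length ∧ (∀ i, c ≤ i + s * h → i < c → p[i]? = some true) ∧
    ∀ i, c ≤ i → i < c + h → p[i]? = some false

theorem PyramidAtPeak.mono {s c h h' : ℕ} {p : List Bool} (hp : PyramidAtPeak s p c h)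
    (h0 : 0 < h') (hle : h' ≤ h) : PyramidAtPeak s p c h' := by
  obtain ⟨h1, h2, h3, h4, h5⟩ := hp
  have hs : s * h' ≤ s * h := Nat.mul_le_mul_left s hle
  exact ⟨h0, by omega, by omega, fun i hi hc => h4 i (by omega) hc,
    fun i hi hc => h5 i hi (by omega)⟩

/-- The word `U^{sh} D^h`. -/
def pyramidWord (s h : ℕ) : List Bool :=
  List.replicate (s * h) true ++ List.replicate h false

theorem length_pyramidWord (s h : ℕ) : (pyramidWord s h).length = (s + 1) * h := by
  simp [pyramidWord]; ring

theorem isPyramidSecS_iff_take_drop {s a b : ℕ} {p : List Bool} :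
    IsPyramidSecS s p a b ↔ ∃ h, 0 < h ∧ b + 1 = a + (s + 1) * h ∧ b < p.length ∧
      (p.drop a).take ((s + 1) * h) = pyramidWord s h := by
  constructor
  · rintro ⟨hab, hb, hdiv, heq⟩
    generalize hh : (b - a + 1) / (s + 1) = h at hdiv heq
    refine ⟨h, ?_, by omega, hb, by rw [← hdiv]; exact heq⟩
    rcases Nat.eq_zero_or_pos h with rfl | hpos
    · simp at hdiv
    · exact hpos
  · rintro ⟨h, h0, hab, hb, heq⟩
    have hpos : 0 < (s + 1) * h := by positivity
    have h1 : b - a + 1 = (s + 1) * h := by omega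
    have hd : (b - a + 1) / (s + 1) = h := by
      rw [h1]; exact Nat.mul_div_cancel_left _ (Nat.succ_pos s)
    refine ⟨by omega, hb, by rw [hd, h1], ?_⟩
    rw [hd, h1]; exact heq

theorem isPyramidSecS_iff_peak {s a b : ℕ} {p : List Bool} :
    IsPyramidSecS s p a b ↔
      ∃ c h, PyramidAtPeak s p c h ∧ a + s * h = c ∧ b + 1 = c + h := by
  rw [isPyramidSecS_iff_take_drop]
  have hring : ∀ h, (s + 1) * h = s * h + h := fun h => by ring
  constructor
  · rintro ⟨h, h0, hab, hb, heq⟩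
    have key : ∀ i, i < s * h + h → p[a + i]? = (pyramidWord s h)[i]? := by
      intro i hi
      rw [← heq, List.getElem?_take, hring, if_pos hi, List.getElem?_drop]
    rw [hring] at hab
    refine ⟨a + s * h, h, ⟨h0, by omega, by omega, fun i hi hc => ?_, fun i hi hc => ?_⟩, rfl,
      by omega⟩
    · have := key (i - a) (by omega)
      rw [show a + (i - a) = i by omega] at this
      rw [this, pyramidWord, List.getElem?_append_left (by simp; omega),
        List.getElem?_replicate_of_lt (by omega)]
    · have := key (i - a) (by omega)
      rw [show a + (i - a) = i by omega] at this
      rw [this, pyramidWord, List.getElem?_append_right (by simp; omega),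
        List.getElem?_replicate_of_lt (by simp; omega)]
  · rintro ⟨c, h, ⟨h0, h1, h2, h3, h4⟩, hac, hbc⟩
    refine ⟨h, h0, by rw [hring]; omega, by omega, ?_⟩
    apply List.ext_getElem?
    intro i
    rw [List.getElem?_take, hring, List.getElem?_drop]
    split_ifs with hi
    · rcases lt_or_ge i (s * h) with hi' | hi'
      · rw [h3 _ (by omega) (by omega), pyramidWord, List.getElem?_append_left (by simpa using hi'),
          List.getElem?_replicate_of_lt (by omega)]
      · rw [h4 _ (by omega) (by omega), pyramidWord, List.getElem?_append_right (by simpa using hi'),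
          List.getElem?_replicate_of_lt (by simp; omega)]
    · rw [eq_comm, List.getElem?_eq_none_iff, length_pyramidWord, hring]
      omega

theorem exists_isPyramidSecS_iff_suffix {s j : ℕ} {p : List Bool} (hj : j < p.length) :
    (∃ a, IsPyramidSecS s p a j) ↔ ∃ h, 0 < h ∧ pyramidWord s h <:+ p.take (j + 1) := by
  simp only [isPyramidSecS_iff_take_drop, List.suffix_iff_eq_drop, length_pyramidWord,
    List.length_take]
  constructor
  · rintro ⟨a, h, h0, hab, -, heq⟩
    refine ⟨h, h0, ?_⟩
    rw [← heq, List.drop_take, min_eq_left (by omega)]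
    congr 2 <;> omega
  · rintro ⟨h, h0, heq⟩
    have hlen := congrArg List.length heq
    simp only [length_pyramidWord, List.length_drop, List.length_take] at hlen
    have hpos : 0 < (s + 1) * h := by positivity
    refine ⟨j + 1 - (s + 1) * h, h, h0, by omega, hj, ?_⟩
    rw [heq, List.drop_take, min_eq_left (by omega)]
    congr 1 ; omega

theorem getD_true_eq_false_iff {p : List Bool} {j : ℕ} :
    p.getD j true = false ↔ p[j]? = some false := by
  rw [List.getD_eq_getElem?_getD]
  cases p[j]? <;> simp

theorem exists_pyramid_covering_iff {s j : ℕ} {p : List Bool} (hj : p[j]? = some false) :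
    (∃ a ∈ Finset.range p.length, ∃ b ∈ Finset.range p.length,
      a ≤ j ∧ j ≤ b ∧ IsPyramidSecS s p a b) ↔ ∃ a, IsPyramidSecS s p a j := by
  constructor
  · rintro ⟨a, -, b, -, haj, hjb, hp⟩
    obtain ⟨c, h, hp, rfl, hb⟩ := isPyramidSecS_iff_peak.1 hp
    have hcj : a + s * h ≤ j := by
      by_contra hlt
      have := hp.2.2.2.1 j (by omega) (by omega)
      simp_all
    have hle : j + 1 - (a + s * h) ≤ h := by omega
    have := Nat.mul_le_mul_left s hle
    exact ⟨a + s * h - s * (j + 1 - (a + s * h)), isPyramidSecS_iff_peak.2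
      ⟨a + s * h, _, hp.mono (by omega) hle, by omega, by omega⟩⟩
  · rintro ⟨a, hp⟩
    have h1 := hp.1
    have h2 := hp.2.1
    exact ⟨a, by simp; omega, j, by simp; omega, h1, le_rfl, hp⟩

theorem exteriorDownSteps_eq_card (s : ℕ) (p : List Bool) [DecidablePred fun j =>
      p[j]? = some false ∧ ∀ h, 0 < h → ¬ pyramidWord s h <:+ p.take (j + 1)] :
    exteriorDownSteps s p = ((Finset.range p.length).filter fun j =>
      p[j]? = some false ∧ ∀ h, 0 < h → ¬ pyramidWord s h <:+ p.take (j + 1)).card := by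
  classical
  unfold exteriorDownSteps
  congr 1
  ext j
  rw [Finset.mem_filter, Finset.mem_filter, getD_true_eq_false_iff]
  refine and_congr_right fun hj => and_congr_right fun hjf => ?_
  rw [exists_pyramid_covering_iff hjf, exists_isPyramidSecS_iff_suffix (Finset.mem_range.1 hj)]
  push Not
  rfl

theorem exteriorDownSteps_nil (s : ℕ) : exteriorDownSteps s [] = 0 := by
  simp [exteriorDownSteps]

open scoped Classical in
theorem exteriorDownSteps_concat (s : ℕ) (w : List Bool) (x : Bool) :
    exteriorDownSteps s (w ++ [x]) = exteriorDownSteps s w +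
      if x = false ∧ ∀ h, 0 < h → ¬ pyramidWord s h <:+ w ++ [x] then 1 else 0 := by
  rw [exteriorDownSteps_eq_card, exteriorDownSteps_eq_card, Finset.card_filter,
    Finset.card_filter, List.length_append, List.length_singleton, Finset.sum_range_succ]
  congr 1
  · refine Finset.sum_congr rfl fun j hj => ?_
    have hj := Finset.mem_range.1 hj
    rw [List.getElem?_append_left hj, List.take_append_of_le_length hj]
  · rw [List.take_of_length_le (by simp)]
    simp

theorem card_filter_getElem?_eq_some (p : List Bool) :
    ((Finset.range p.length).filter fun j => p[j]? = some false).card = p.count false := by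
  induction p using List.reverseRecOn with
  | nil => simp
  | append_singleton w x ih =>
    rw [Finset.card_filter, List.length_append, List.length_singleton, Finset.sum_range_succ,
      List.count_append, ← ih, Finset.card_filter]
    congr 1
    · refine Finset.sum_congr rfl fun j hj => ?_
      rw [List.getElem?_append_left (Finset.mem_range.1 hj)]
    · cases x <;> simp

theorem maximalPyramidSecS_iff_peak {s a b : ℕ} {p : List Bool} :
    MaximalPyramidSecS s p a b ↔ ∃ c h, PyramidAtPeak s p c h ∧ ¬ PyramidAtPeak s p c (h + 1) ∧
      a + s * h = c ∧ b + 1 = c + h := by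
  unfold MaximalPyramidSecS
  rw [isPyramidSecS_iff_peak]
  constructor
  · rintro ⟨⟨c, h, hp, hac, hbc⟩, hmax⟩
    refine ⟨c, h, hp, fun hp' => hmax ?_, hac, hbc⟩
    obtain ⟨-, h2, h3, -⟩ := id hp'
    rw [mul_add, mul_one] at h2
    refine ⟨by omega, by omega, isPyramidSecS_iff_peak.2 ⟨c, h + 1, hp', ?_, by omega⟩⟩
    rw [mul_add, mul_one]; omega
  · rintro ⟨c, h, hp, hmax, hac, hbc⟩
    refine ⟨⟨c, h, hp, hac, hbc⟩, ?_⟩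
    rintro ⟨hsa, hb, hp'⟩
    obtain ⟨c', h', hp', hac', hbc'⟩ := isPyramidSecS_iff_peak.1 hp'
    have hring : (s + 1) * h' = (s + 1) * (h + 1) := by
      have h1 : (s + 1) * h' = s * h' + h' := by ring
      have h2 : (s + 1) * (h + 1) = s * h + h + s + 1 := by ring
      omega
    have hh : h' = h + 1 := Nat.eq_of_mul_eq_mul_left (Nat.succ_pos s) hring
    subst hh
    have hcc : c' = c := by omega
    exact hmax (hcc ▸ hp')

theorem PyramidAtPeak.peak_eq {s c c' h h' j : ℕ} {p : List Bool} (hs : 1 ≤ s)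
    (hp : PyramidAtPeak s p c h) (hp' : PyramidAtPeak s p c' h') (hc : c ≤ j) (hj : j < c + h)
    (hc' : c' ≤ j) (hj' : j < c' + h') : c = c' := by
  have aux : ∀ {c c' h h' : ℕ}, PyramidAtPeak s p c h → PyramidAtPeak s p c' h' →
      j < c + h → c' ≤ j → ¬ c < c' := by
    intro c c' h h' hp hp' hj hc' hlt
    have hpos : 0 < s * h' := Nat.mul_pos hs hp'.1
    have h1 := hp'.2.2.2.1 (c' - 1) (by omega) (by omega)
    have h2 := hp.2.2.2.2 (c' - 1) (by omega) (by omega)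
    simp_all
  have := aux hp hp' hj hc'
  have := aux hp' hp hj' hc
  omega

theorem PyramidAtPeak.height_eq {s c h h' : ℕ} {p : List Bool} (hp : PyramidAtPeak s p c h)
    (hp' : PyramidAtPeak s p c h') (hmax : ¬ PyramidAtPeak s p c (h + 1))
    (hmax' : ¬ PyramidAtPeak s p c (h' + 1)) : h = h' := by
  rcases lt_trichotomy h h' with hlt | rfl | hlt
  · exact absurd (hp'.mono (Nat.succ_pos _) hlt) hmax
  · rfl
  · exact absurd (hp.mono (Nat.succ_pos _) hlt) hmax'

theorem PyramidAtPeak.exists_maximal {s c h : ℕ} {p : List Bool} (hp : PyramidAtPeak s p c h) :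
    ∃ h', h ≤ h' ∧ PyramidAtPeak s p c h' ∧ ¬ PyramidAtPeak s p c (h' + 1) := by
  by_contra! hcon
  have hall : ∀ k, PyramidAtPeak s p c (h + k) := by
    intro k
    induction k with
    | zero => exact hp
    | succ k ih => exact hcon _ (Nat.le_add_right _ _) ih
  have := (hall (p.length + 1)).2.2.1
  omega

theorem pyramidWeightS_eq_card {s : ℕ} (hs : 1 ≤ s) (p : List Bool) [DecidablePred fun j =>
      p[j]? = some false ∧ ∃ a ∈ Finset.range p.length, ∃ b ∈ Finset.range p.length,
        a ≤ j ∧ j ≤ b ∧ IsPyramidSecS s p a b] :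
    pyramidWeightS s p = ((Finset.range p.length).filter fun j =>
      p[j]? = some false ∧ ∃ a ∈ Finset.range p.length, ∃ b ∈ Finset.range p.length,
        a ≤ j ∧ j ≤ b ∧ IsPyramidSecS s p a b).card := by
  classical
  have hdiv : ∀ {a b c h : ℕ}, 0 < h → a + s * h = c → b + 1 = c + h →
      (b - a + 1) / (s + 1) = h := by
    intro a b c h h0 hac hbc
    rw [show b - a + 1 = (s + 1) * h by rw [add_mul, one_mul]; omega]
    exact Nat.mul_div_cancel_left _ (Nat.succ_pos s)
  let down : ℕ × ℕ → Finset ℕ := fun q =>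
    Finset.Ico (q.2 + 1 - (q.2 - q.1 + 1) / (s + 1)) (q.2 + 1)
  have hcard : ∀ q ∈ (Finset.range p.length ×ˢ Finset.range p.length).filter
      (fun q : ℕ × ℕ => MaximalPyramidSecS s p q.1 q.2),
      (q.2 - q.1 + 1) / (s + 1) = (down q).card := by
    rintro ⟨a, b⟩ hq
    obtain ⟨c, h, hp, -, hac, hbc⟩ := maximalPyramidSecS_iff_peak.1 (Finset.mem_filter.1 hq).2
    simp only [down, Nat.card_Ico, hdiv hp.1 hac hbc]
    omega
  unfold pyramidWeightS
  rw [Finset.sum_congr rfl hcard, ← Finset.card_biUnion]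
  · congr 1
    ext j
    simp only [Finset.mem_biUnion, Finset.mem_filter, Finset.mem_product, Finset.mem_range,
      Prod.exists, down, Finset.mem_Ico]
    constructor
    · rintro ⟨a, b, ⟨⟨ha, hb⟩, hmax⟩, hj, hjb⟩
      obtain ⟨c, h, hp, -, hac, hbc⟩ := maximalPyramidSecS_iff_peak.1 hmax
      rw [hdiv hp.1 hac hbc] at hj
      exact ⟨by omega, hp.2.2.2.2 j (by omega) (by omega), a, ha, b, hb, by omega, by omega,
        hmax.1⟩
    · rintro ⟨hjl, hjf, a, ha, b, hb, haj, hjb, hp⟩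
      obtain ⟨c, h, hp, hac, hbc⟩ := isPyramidSecS_iff_peak.1 hp
      have hcj : c ≤ j := by
        by_contra hlt
        have := hp.2.2.2.1 j (by omega) (by omega)
        simp_all
      obtain ⟨h', hle, hp', hmax⟩ := hp.exists_maximal
      have h2 := hp'.2.1
      have h3 := hp'.2.2.1
      have hpos := hp'.1
      have e1 : c - s * h' + s * h' = c := by omega
      have e2 : c + h' - 1 + 1 = c + h' := by omega
      refine ⟨c - s * h', c + h' - 1, ⟨⟨by omega, by omega⟩,
        maximalPyramidSecS_iff_peak.2 ⟨c, h', hp', hmax, e1, e2⟩⟩, ?_, by omega⟩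
      rw [hdiv hpos e1 e2]
      omega
  · rintro ⟨a, b⟩ hq ⟨a', b'⟩ hq' hne
    obtain ⟨c, h, hp, hm, hac, hbc⟩ := maximalPyramidSecS_iff_peak.1 (Finset.mem_filter.1 hq).2
    obtain ⟨c', h', hp', hm', hac', hbc'⟩ :=
      maximalPyramidSecS_iff_peak.1 (Finset.mem_filter.1 hq').2
    simp only [Function.onFun, down]
    rw [Finset.disjoint_left]
    intro j hj hj'
    simp only [Finset.mem_Ico, hdiv hp.1 hac hbc, hdiv hp'.1 hac' hbc'] at hj hj'
    have hc := hp.peak_eq hs hp' (j := j) (by omega) (by omega) (by omega) (by omega)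
    subst hc
    have hh := hp.height_eq hp' hm hm'
    subst hh
    exact hne (Prod.ext (by simp only; omega) (by simp only; omega))

theorem exteriorDownSteps_add_pyramidWeightS {s : ℕ} (hs : 1 ≤ s) (p : List Bool) :
    exteriorDownSteps s p + pyramidWeightS s p = p.count false := by
  classical
  rw [pyramidWeightS_eq_card hs, ← card_filter_getElem?_eq_some, exteriorDownSteps]
  simp only [getD_true_eq_false_iff]
  simp only [← Finset.filter_filter]
  rw [add_comm]
  convert Finset.card_filter_add_card_filter_not _

/-- A word whose path starts at height `0`, never passes below the x-axis and ends at height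
`k`. -/
def IsNonnegWord (s k : ℕ) (w : List Bool) : Prop :=
  w.count true = s * w.count false + k ∧ ∀ u, u <+: w → s * u.count false ≤ u.count true

theorem isSAryPath_iff {s n : ℕ} {p : List Bool} :
    IsSAryPath s n p ↔ IsNonnegWord s 0 p ∧ p.count false = n := by
  have hlen : p.count true + p.count false = p.length := List.count_true_add_count_false p
  constructor
  · rintro ⟨h1, h2, h3⟩
    refine ⟨⟨?_, fun u hu => ?_⟩, h2⟩
    · rw [h2] at hlen ⊢; rw [add_mul] at h1; omega
    · rw [List.prefix_iff_eq_take.1 hu]; exact h3 _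
  · rintro ⟨⟨h1, h2⟩, rfl⟩
    exact ⟨by rw [← hlen, h1]; ring, rfl, fun i => h2 _ (List.take_prefix i p)⟩

theorem isNonnegWord_nil_iff {s k : ℕ} : IsNonnegWord s k [] ↔ k = 0 := by
  simp [IsNonnegWord, eq_comm]

theorem isNonnegWord_concat_false_iff {s k : ℕ} {w : List Bool} :
    IsNonnegWord s k (w ++ [false]) ↔ IsNonnegWord s (k + s) w := by
  simp only [IsNonnegWord, List.prefix_concat_iff, List.count_append]
  have hr : s * (w.count false + 1) = s * w.count false + s := by ring
  constructor
  · rintro ⟨h1, h2⟩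
    refine ⟨?_, fun u hu => h2 u (Or.inr hu)⟩
    simp [hr] at h1; omega
  · rintro ⟨h1, h2⟩
    refine ⟨by simp [hr]; omega, ?_⟩
    rintro u (rfl | hu)
    · simp [hr]; omega
    · exact h2 u hu

theorem isNonnegWord_concat_true_iff {s k : ℕ} {w : List Bool} :
    IsNonnegWord s k (w ++ [true]) ↔ ∃ j, k = j + 1 ∧ IsNonnegWord s j w := by
  simp only [IsNonnegWord, List.prefix_concat_iff, List.count_append]
  constructor
  · rintro ⟨h1, h2⟩
    have := h2 w (Or.inr List.prefix_rfl)
    simp at h1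
    exact ⟨k - 1, by omega, by omega, fun u hu => h2 u (Or.inr hu)⟩
  · rintro ⟨j, rfl, h1, h2⟩
    refine ⟨by simp; omega, ?_⟩
    rintro u (rfl | hu)
    · simp; omega
    · exact h2 u hu

theorem IsNonnegWord.append {s i j : ℕ} {v w : List Bool} (hv : IsNonnegWord s i v)
    (hw : IsNonnegWord s j w) : IsNonnegWord s (i + j) (v ++ w) := by
  induction w using List.reverseRecOn generalizing j with
  | nil => rw [isNonnegWord_nil_iff] at hw; simpa [hw] using hv
  | append_singleton w x ih =>
    rw [← List.append_assoc]
    cases x with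
    | false =>
      rw [isNonnegWord_concat_false_iff] at hw ⊢
      rw [add_assoc]; exact ih hw
    | true =>
      obtain ⟨k, rfl, hw'⟩ := isNonnegWord_concat_true_iff.1 hw
      exact isNonnegWord_concat_true_iff.2 ⟨i + k, rfl, ih hw'⟩

theorem isNonnegWord_singleton_true (s : ℕ) : IsNonnegWord s 1 [true] :=
  isNonnegWord_concat_true_iff (w := []).2 ⟨0, rfl, isNonnegWord_nil_iff.2 rfl⟩

theorem IsNonnegWord.append_true_append {s i j : ℕ} {v w : List Bool} (hv : IsNonnegWord s i v)
    (hw : IsNonnegWord s j w) : IsNonnegWord s (i + j + 1) (v ++ true :: w) := by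
  have := hv.append ((isNonnegWord_singleton_true s).append hw)
  rwa [show i + (1 + j) = i + j + 1 by ring] at this

theorem IsNonnegWord.component {t : ℕ} {w : List Bool} (hw : IsNonnegWord (t + 1) t w) :
    IsNonnegWord (t + 1) 0 (true :: w ++ [false]) :=
  isNonnegWord_concat_false_iff.2 <| by
    simpa [add_comm] using (isNonnegWord_singleton_true (t + 1)).append hw

theorem IsNonnegWord.exists_eq_append {s i k : ℕ} {w : List Bool} (hik : i < k)
    (hw : IsNonnegWord s k w) : ∃ u v, w = u ++ true :: v ∧ IsNonnegWord s i u ∧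
      IsNonnegWord s (k - i - 1) v := by
  induction w using List.reverseRecOn generalizing k with
  | nil => rw [isNonnegWord_nil_iff] at hw; omega
  | append_singleton w x ih =>
    cases x with
    | false =>
      rw [isNonnegWord_concat_false_iff] at hw
      obtain ⟨u, v, rfl, hu, hv⟩ := ih (by omega) hw
      refine ⟨u, v ++ [false], by simp, hu, isNonnegWord_concat_false_iff.2 ?_⟩
      rwa [show k - i - 1 + s = k + s - i - 1 by omega]
    | true =>
      obtain ⟨j, rfl, hw'⟩ := isNonnegWord_concat_true_iff.1 hw
      rcases (Nat.lt_succ_iff.1 hik).eq_or_lt with rfl | hij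
      · exact ⟨w, [], rfl, hw', isNonnegWord_nil_iff.2 (by omega)⟩
      · obtain ⟨u, v, rfl, hu, hv⟩ := ih hij hw'
        exact ⟨u, v ++ [true], by simp, hu,
          isNonnegWord_concat_true_iff.2 ⟨j - i - 1, by omega, hv⟩⟩

theorem IsNonnegWord.append_true_injective {s i j : ℕ} {u u' v v' : List Bool}
    (hu : IsNonnegWord s i u) (hv : IsNonnegWord s j v) (hu' : IsNonnegWord s i u')
    (hv' : IsNonnegWord s j v') (h : u ++ true :: v = u' ++ true :: v') : u = u' ∧ v = v' := by
  have aux : ∀ {u u' v v' c : List Bool}, IsNonnegWord s i u → IsNonnegWord s j v →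
      IsNonnegWord s i u' → u' = u ++ c → true :: v = c ++ true :: v' → c = [] := by
    rintro u u' v v' c hu hv hu' rfl hc
    cases c with
    | nil => rfl
    | cons x c =>
      rw [List.cons_append, List.cons.injEq] at hc
      obtain ⟨rfl, rfl⟩ := hc
      have h1 := hu.1
      have h2 := hu'.1
      have h3 := hv.2 c (List.prefix_append _ _)
      simp [mul_add] at h2
      omega
  rcases List.append_eq_append_iff.1 h with ⟨c, h1, h2⟩ | ⟨c, h1, h2⟩
  · have := aux hu hv hu' h1 h2
    subst this
    simp_all
  · have := aux hu' hv' hu h1 h2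
    subst this
    simp_all

/-- Splitting a word ending at height `i + j + 1` at its last visit to height `i`. -/
noncomputable def splitEquiv (s i j : ℕ) :
    {w // IsNonnegWord s i w} × {w // IsNonnegWord s j w} ≃
      {w // IsNonnegWord s (i + j + 1) w} :=
  Equiv.ofBijective (fun q => ⟨q.1.1 ++ true :: q.2.1, q.1.2.append_true_append q.2.2⟩) <| by
    constructor
    · rintro ⟨⟨u, hu⟩, ⟨v, hv⟩⟩ ⟨⟨u', hu'⟩, ⟨v', hv'⟩⟩ h
      obtain ⟨rfl, rfl⟩ := hu.append_true_injective hv hu' hv' (Subtype.mk.inj h)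
      rfl
    · rintro ⟨w, hw⟩
      obtain ⟨u, v, rfl, hu, hv⟩ := hw.exists_eq_append (i := i) (by omega)
      rw [show i + j + 1 - i - 1 = j by omega] at hv
      exact ⟨⟨⟨u, hu⟩, ⟨v, hv⟩⟩, rfl⟩

/-- Splitting off the last prime component `U v D` of a nonempty path. -/
noncomputable def lastComponentEquiv (t : ℕ) :
    Unit ⊕ {w // IsNonnegWord (t + 1) 0 w} × {w // IsNonnegWord (t + 1) t w} ≃
      {w // IsNonnegWord (t + 1) 0 w} :=
  Equiv.ofBijective (Sum.elim (fun _ => ⟨[], isNonnegWord_nil_iff.2 rfl⟩)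
    fun q => ⟨q.1.1 ++ true :: q.2.1 ++ [false], isNonnegWord_concat_false_iff.2 <| by
      simpa [add_comm, add_assoc] using q.1.2.append_true_append q.2.2⟩) <| by
    constructor
    · rintro (_ | ⟨⟨u, hu⟩, ⟨v, hv⟩⟩) (_ | ⟨⟨u', hu'⟩, ⟨v', hv'⟩⟩) h
      · rfl
      · simp at h
      · simp at h
      · obtain ⟨rfl, rfl⟩ := hu.append_true_injective hv hu' hv'
          (List.append_cancel_right (Subtype.mk.inj h))
        rfl
    · rintro ⟨w, hw⟩
      rcases List.eq_nil_or_concat w with rfl | ⟨w, x, hwx⟩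
      · exact ⟨Sum.inl (), rfl⟩
      · rw [List.concat_eq_append] at hwx
        subst hwx
        cases x with
        | false =>
          obtain ⟨u, v, rfl, hu, hv⟩ :=
            (isNonnegWord_concat_false_iff.1 hw).exists_eq_append (i := 0) (by omega)
          rw [show 0 + (t + 1) - 0 - 1 = t by omega] at hv
          exact ⟨Sum.inr ⟨⟨u, hu⟩, ⟨v, hv⟩⟩, rfl⟩
        | true =>
          obtain ⟨j, hj, -⟩ := isNonnegWord_concat_true_iff.1 hw
          omega

/-- A suffix of a pyramid that does not go below its starting height is the whole pyramid or
empty. -/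
theorem IsNonnegWord.eq_of_suffix_pyramidWord {s k h : ℕ} {w : List Bool} (hs : 1 ≤ s)
    (hw : IsNonnegWord s k w) (hne : w ≠ []) (hsuf : w <:+ pyramidWord s h) :
    w = pyramidWord s h := by
  have h1 := hw.2 w List.prefix_rfl
  rw [List.suffix_iff_eq_drop] at hsuf
  generalize (pyramidWord s h).length - w.length = m at hsuf
  subst hsuf
  have hpos : 0 < s * h + h - m := by
    have := List.length_pos_iff.2 hne
    rw [List.length_drop, length_pyramidWord, add_mul, one_mul] at this
    exact this
  rw [pyramidWord, List.drop_append, List.count_append, List.count_append] at h1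
  simp [List.count_replicate] at h1
  have hm : m = 0 := by
    rcases le_or_gt m (s * h) with hle | hlt
    · rw [show m - s * h = 0 by omega, Nat.sub_zero] at h1
      have : 0 < s * h := by
        apply Nat.mul_pos hs
        by_contra h0
        have : h = 0 := by omega
        subst this; omega
      omega
    · have : 0 < s * (h - (m - s * h)) := Nat.mul_pos hs (by omega)
      omega
  rw [hm, List.drop_zero]

theorem IsNonnegWord.pyramidWord_suffix_append_iff {s k h : ℕ} {v w : List Bool} (hs : 1 ≤ s)
    (hw : IsNonnegWord s k w) (hne : w ≠ []) :
    pyramidWord s h <:+ v ++ w ↔ pyramidWord s h <:+ w := by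
  refine ⟨fun hsuf => ?_, fun hsuf => hsuf.trans (List.suffix_append v w)⟩
  rcases List.suffix_or_suffix_of_suffix hsuf (List.suffix_append v w) with h' | h'
  · exact h'
  · rw [← hw.eq_of_suffix_pyramidWord hs hne h']

theorem exteriorDownSteps_append {s k : ℕ} {v w : List Bool} (hs : 1 ≤ s)
    (hw : IsNonnegWord s k w) :
    exteriorDownSteps s (v ++ w) = exteriorDownSteps s v + exteriorDownSteps s w := by
  classical
  induction w using List.reverseRecOn generalizing k with
  | nil => simp [exteriorDownSteps_nil]
  | append_singleton w x ih =>
    obtain ⟨j, hw'⟩ : ∃ j, IsNonnegWord s j w := by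
      cases x with
      | false => exact ⟨_, isNonnegWord_concat_false_iff.1 hw⟩
      | true =>
        obtain ⟨j, -, h⟩ := isNonnegWord_concat_true_iff.1 hw
        exact ⟨j, h⟩
    rw [← List.append_assoc, exteriorDownSteps_concat, exteriorDownSteps_concat, ih hw',
      List.append_assoc, add_assoc]
    have hiff := fun h => hw.pyramidWord_suffix_append_iff (h := h) (v := v) hs (by simp)
    rw [if_congr (and_congr_right' (forall₂_congr fun h _ => not_congr (hiff h))) rfl rfl]

theorem exteriorDownSteps_replicate_true (s m : ℕ) :
    exteriorDownSteps s (List.replicate m true) = 0 := by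
  induction m with
  | zero => exact exteriorDownSteps_nil s
  | succ m ih => rw [List.replicate_succ', exteriorDownSteps_concat, ih]; simp

theorem exteriorDownSteps_replicate_append_replicate {s m h : ℕ} (hm : s * h ≤ m) :
    exteriorDownSteps s (List.replicate m true ++ List.replicate h false) = 0 := by
  induction h with
  | zero => simpa using exteriorDownSteps_replicate_true s m
  | succ h ih =>
    have hle := (Nat.mul_le_mul_left s (Nat.le_succ h)).trans hm
    rw [List.replicate_succ', ← List.append_assoc, exteriorDownSteps_concat, ih hle, if_neg]
    rintro ⟨-, hno⟩
    refine hno (h + 1) (Nat.succ_pos h) ⟨List.replicate (m - s * (h + 1)) true, ?_⟩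
    rw [pyramidWord, ← List.append_assoc, ← List.replicate_add, Nat.sub_add_cancel hm,
      List.replicate_succ', List.append_assoc]

/-- The word `U^{sh + s - 1} D^h` with `s = t + 1`, that is, a pyramid without its first and last
step. -/
def innerPyramidWord (t h : ℕ) : List Bool :=
  List.replicate ((t + 1) * h + t) true ++ List.replicate h false

theorem pyramidWord_eq_innerPyramidWord (t h : ℕ) :
    pyramidWord (t + 1) (h + 1) = true :: innerPyramidWord t h ++ [false] := by
  rw [pyramidWord, innerPyramidWord, List.replicate_succ' (n := h),
    show (t + 1) * (h + 1) = (t + 1) * h + t + 1 by ring, List.replicate_succ]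
  simp

theorem innerPyramidWord_injective (t : ℕ) : Function.Injective (innerPyramidWord t) := by
  intro h h' heq
  simpa [innerPyramidWord, List.count_replicate] using congrArg (List.count false) heq

theorem isNonnegWord_replicate_true (s m : ℕ) : IsNonnegWord s m (List.replicate m true) := by
  induction m with
  | zero => exact isNonnegWord_nil_iff.2 rfl
  | succ m ih =>
    rw [List.replicate_succ']
    exact isNonnegWord_concat_true_iff.2 ⟨m, rfl, ih⟩

theorem isNonnegWord_innerPyramidWord (t h : ℕ) :
    IsNonnegWord (t + 1) t (innerPyramidWord t h) := by
  have aux : ∀ k, IsNonnegWord (t + 1) k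
      (List.replicate ((t + 1) * h + k) true ++ List.replicate h false) := by
    induction h with
    | zero => intro k; simpa using isNonnegWord_replicate_true (t + 1) k
    | succ h ih =>
      intro k
      rw [List.replicate_succ', ← List.append_assoc, isNonnegWord_concat_false_iff,
        show (t + 1) * (h + 1) + k = (t + 1) * h + (k + (t + 1)) by ring]
      exact ih _
  exact aux t

/-- A proper nonempty prefix of a prime component `U w D` ends above the x-axis, so a pyramid
that is a suffix of the component is the whole component. -/
theorem IsNonnegWord.exists_pyramidWord_suffix_iff {t : ℕ} {w : List Bool}
    (hw : IsNonnegWord (t + 1) t w) :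
    (∃ h, 0 < h ∧ pyramidWord (t + 1) h <:+ true :: w ++ [false]) ↔
      w ∈ Set.range (innerPyramidWord t) := by
  constructor
  · rintro ⟨h, h0, u, hu⟩
    obtain ⟨h, rfl⟩ : ∃ h', h = h' + 1 := ⟨h - 1, by omega⟩
    rw [pyramidWord_eq_innerPyramidWord, ← List.append_assoc] at hu
    have hu := List.append_cancel_right hu
    cases u with
    | nil => exact ⟨h, by simpa using hu⟩
    | cons x u =>
      simp only [List.cons_append, List.cons.injEq] at hu
      obtain ⟨-, rfl⟩ := hu
      have h1 := hw.1
      have h2 := hw.2 u (List.prefix_append _ _)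
      have h3 := (isNonnegWord_innerPyramidWord t h).1
      simp [mul_add] at h1
      omega
  · rintro ⟨h, rfl⟩
    exact ⟨h + 1, Nat.succ_pos h, by rw [pyramidWord_eq_innerPyramidWord]⟩

open scoped Classical in
theorem exteriorDownSteps_component {t : ℕ} {w : List Bool} (hw : IsNonnegWord (t + 1) t w) :
    exteriorDownSteps (t + 1) (true :: w ++ [false]) = exteriorDownSteps (t + 1) w +
      if w ∈ Set.range (innerPyramidWord t) then 0 else 1 := by
  rw [exteriorDownSteps_concat, ← List.singleton_append, exteriorDownSteps_append (by omega) hw,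
    ← hw.exists_pyramidWord_suffix_iff]
  have h1 : exteriorDownSteps (t + 1) [true] = 0 := exteriorDownSteps_replicate_true _ 1
  rw [h1, zero_add]
  congr 1
  by_cases hex : ∃ h, 0 < h ∧ pyramidWord (t + 1) h <:+ true :: w ++ [false]
  · rw [if_pos hex, if_neg]
    rintro ⟨-, hno⟩
    obtain ⟨h, h0, hsuf⟩ := hex
    exact hno h h0 hsuf
  · rw [if_neg hex, if_pos]
    exact ⟨rfl, fun h h0 hsuf => hex ⟨h, h0, hsuf⟩⟩

section GeneratingFunction

open MvPowerSeries

/-- The generating function of a weighted class: the coefficient at `d` counts the elements of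
weight `d`. -/
noncomputable def weightSeries {σ α : Type*} (ω : α → σ →₀ ℕ) : MvPowerSeries σ ℚ :=
  fun d => (Nat.card {a // ω a = d} : ℚ)

section WeightSeries

variable {σ α β : Type*}

theorem weightSeries_congr {ω : α → σ →₀ ℕ} {ω' : β → σ →₀ ℕ} (e : α ≃ β)
    (h : ∀ a, ω' (e a) = ω a) : weightSeries ω = weightSeries ω' := by
  funext d
  exact congrArg Nat.cast (Nat.card_congr (e.subtypeEquiv fun a => by rw [h]))

theorem weightSeries_sumElim {ω : α → σ →₀ ℕ} {ω' : β → σ →₀ ℕ}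
    (hω : ∀ d, Finite {a // ω a = d}) (hω' : ∀ d, Finite {b // ω' b = d}) :
    weightSeries (Sum.elim ω ω') = weightSeries ω + weightSeries ω' := by
  funext d
  have := hω d
  have := hω' d
  have h : Nat.card {x // Sum.elim ω ω' x = d} =
      Nat.card {a // ω a = d} + Nat.card {b // ω' b = d} := by
    rw [← Nat.card_sum]
    exact Nat.card_congr Equiv.subtypeSum
  change ((Nat.card _ : ℕ) : ℚ) = (Nat.card _ : ℚ) + (Nat.card _ : ℚ)
  rw [h, Nat.cast_add]

theorem weightSeries_prod {ω : α → σ →₀ ℕ} {ω' : β → σ →₀ ℕ}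
    (hω : ∀ d, Finite {a // ω a = d}) (hω' : ∀ d, Finite {b // ω' b = d}) :
    weightSeries (fun q : α × β => ω q.1 + ω' q.2) = weightSeries ω * weightSeries ω' := by
  classical
  ext d
  rw [coeff_mul]
  let e : {q : α × β // ω q.1 + ω' q.2 = d} ≃
      Σ c : Finset.HasAntidiagonal.antidiagonal d, {a // ω a = c.1.1} × {b // ω' b = c.1.2} :=
    { toFun := fun q => ⟨⟨(ω q.1.1, ω' q.1.2), Finset.HasAntidiagonal.mem_antidiagonal.2 q.2⟩,
        ⟨q.1.1, rfl⟩, ⟨q.1.2, rfl⟩⟩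
      invFun := fun x => ⟨(x.2.1.1, x.2.2.1), by
        rw [x.2.1.2, x.2.2.2]; exact Finset.HasAntidiagonal.mem_antidiagonal.1 x.1.2⟩
      left_inv := fun q => rfl
      right_inv := by
        rintro ⟨⟨⟨c, c'⟩, hc⟩, ⟨a, ha⟩, ⟨b, hb⟩⟩
        change ω a = c at ha
        change ω' b = c' at hb
        subst ha hb
        rfl }
  have h : Nat.card {q : α × β // ω q.1 + ω' q.2 = d} =
      ∑ c ∈ Finset.HasAntidiagonal.antidiagonal d,
        Nat.card {a // ω a = c.1} * Nat.card {b // ω' b = c.2} := by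
    rw [Nat.card_congr e, Nat.card_sigma]
    simp only [Nat.card_prod]
    exact Finset.sum_coe_sort _
      fun c : (σ →₀ ℕ) × (σ →₀ ℕ) => Nat.card {a // ω a = c.1} * Nat.card {b // ω' b = c.2}
  change ((Nat.card _ : ℕ) : ℚ) =
    ∑ c ∈ Finset.HasAntidiagonal.antidiagonal d, (Nat.card _ : ℚ) * (Nat.card _ : ℚ)
  rw [h]
  push_cast
  rfl

theorem weightSeries_unit (c : σ →₀ ℕ) :
    weightSeries (fun _ : Unit => c) = monomial c (1 : ℚ) := by
  classical
  ext d
  rw [coeff_monomial]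
  change ((Nat.card _ : ℕ) : ℚ) = _
  split_ifs with h
  · subst h
    simp
  · have : IsEmpty {_u : Unit // c = d} := ⟨fun u => h u.2.symm⟩
    simp

theorem weightSeries_const_add {ω : α → σ →₀ ℕ} (hω : ∀ d, Finite {a // ω a = d})
    (c : σ →₀ ℕ) :
    weightSeries (fun a => c + ω a) = monomial c (1 : ℚ) * weightSeries ω := by
  rw [← weightSeries_unit, ← weightSeries_prod (fun d => inferInstance) hω]
  exact weightSeries_congr (Equiv.punitProd α).symm fun a => rfl

theorem finite_fiber_subtype {ω : α → σ →₀ ℕ} (hω : ∀ d, Finite {a // ω a = d})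
    (P : α → Prop) (d : σ →₀ ℕ) : Finite {a : {a // P a} // ω a = d} := by
  have := hω d
  exact Finite.of_injective (fun a => (⟨a.1.1, a.2⟩ : {a // ω a = d}))
    fun a b h => Subtype.ext (Subtype.ext (Subtype.mk.inj h))

theorem weightSeries_eq_add_compl {ω : α → σ →₀ ℕ} (hω : ∀ d, Finite {a // ω a = d})
    (P : α → Prop) : weightSeries ω =
      weightSeries (fun a : {a // P a} => ω a) + weightSeries (fun a : {a // ¬ P a} => ω a) := by
  classical
  rw [← weightSeries_sumElim (finite_fiber_subtype hω P) (finite_fiber_subtype hω _)]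
  refine (weightSeries_congr (Equiv.sumCompl P) ?_).symm
  rintro (a | a) <;> rfl

theorem weightSeries_single_nat (i : σ) :
    weightSeries (fun n : ℕ => Finsupp.single i n) = (1 - X i : MvPowerSeries σ ℚ)⁻¹ := by
  have hfin : ∀ d, Finite {n : ℕ // Finsupp.single i n = d} := fun d => by
    have : Subsingleton {n : ℕ // Finsupp.single i n = d} :=
      ⟨fun a b => Subtype.ext (Finsupp.single_injective i (a.2.trans b.2.symm))⟩
    infer_instance
  have hfin' : ∀ d, Finite {n : ℕ // Finsupp.single i 1 + Finsupp.single i n = d} := fun d => by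
    have : Subsingleton {n : ℕ // Finsupp.single i 1 + Finsupp.single i n = d} :=
      ⟨fun a b => Subtype.ext (Finsupp.single_injective i (add_left_cancel (a.2.trans b.2.symm)))⟩
    infer_instance
  have hrec : weightSeries (fun n : ℕ => Finsupp.single i n) =
      1 + X i * weightSeries (fun n : ℕ => Finsupp.single i n) := by
    conv_rhs => rw [X, ← weightSeries_const_add hfin, ← monomial_zero_one, ← weightSeries_unit,
      ← weightSeries_sumElim (fun d => inferInstance) hfin']
    refine (weightSeries_congr ((Equiv.sumComm _ _).trans Equiv.natSumPUnitEquivNat) ?_).symm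
    rintro (a | n)
    · exact Finsupp.single_zero i
    · exact (Finsupp.single_add i n 1).trans (add_comm _ _)
  rw [MvPowerSeries.eq_inv_iff_mul_eq_one (by simp)]
  linear_combination hrec

end WeightSeries

/-- The weight of a word: the exponent of `x` counts the down steps and the exponent of `y` the
exterior down steps. -/
noncomputable def wordWeight (s : ℕ) (w : List Bool) : Fin 2 →₀ ℕ :=
  Finsupp.single 0 (w.count false) + Finsupp.single 1 (exteriorDownSteps s w)

theorem wordWeight_eq_iff {s : ℕ} {w : List Bool} {d : Fin 2 →₀ ℕ} :
    wordWeight s w = d ↔ w.count false = d 0 ∧ exteriorDownSteps s w = d 1 := by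
  simp [wordWeight, Finsupp.ext_iff, Fin.forall_fin_two]

theorem wordWeight_append {s k : ℕ} {v w : List Bool} (hs : 1 ≤ s) (hw : IsNonnegWord s k w) :
    wordWeight s (v ++ w) = wordWeight s v + wordWeight s w := by
  simp only [wordWeight, exteriorDownSteps_append hs hw, List.count_append, Finsupp.single_add]
  abel

theorem wordWeight_true_cons {s k : ℕ} {w : List Bool} (hs : 1 ≤ s) (hw : IsNonnegWord s k w) :
    wordWeight s (true :: w) = wordWeight s w := by
  have h : exteriorDownSteps s [true] = 0 := exteriorDownSteps_replicate_true s 1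
  rw [← List.singleton_append, wordWeight_append hs hw]
  simp [wordWeight, h]

theorem finite_wordWeight_fiber (s k : ℕ) (d : Fin 2 →₀ ℕ) :
    Finite {w : {w // IsNonnegWord s k w} // wordWeight s w = d} := by
  have := List.finite_length_eq Bool (s * d 0 + k + d 0)
  refine @Finite.of_injective _ {l : List Bool // l.length = s * d 0 + k + d 0} this
    (fun w => ⟨w.1.1, ?_⟩) fun v w h => Subtype.ext (Subtype.ext (Subtype.mk.inj h))
  rw [← List.count_true_add_count_false, w.1.2.1, (wordWeight_eq_iff.1 w.2).1]

/-- The generating function of the words ending at height `k`. -/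
noncomputable def nonnegWordSeries (s k : ℕ) : MvPowerSeries (Fin 2) ℚ :=
  weightSeries fun w : {w // IsNonnegWord s k w} => wordWeight s w

theorem Es_eq_nonnegWordSeries (s : ℕ) : Es s = nonnegWordSeries s 0 := by
  funext d
  refine congrArg Nat.cast (Nat.card_congr ?_)
  refine (Equiv.subtypeEquivRight fun p => ?_).trans
    (Equiv.subtypeSubtypeEquivSubtypeInter _ fun w => wordWeight s w = d).symm
  rw [isSAryPath_iff, wordWeight_eq_iff, and_assoc]

theorem nonnegWordSeries_mul {s : ℕ} (hs : 1 ≤ s) (i j : ℕ) :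
    nonnegWordSeries s i * nonnegWordSeries s j = nonnegWordSeries s (i + j + 1) := by
  rw [nonnegWordSeries, nonnegWordSeries,
    ← weightSeries_prod (finite_wordWeight_fiber s i) (finite_wordWeight_fiber s j)]
  refine weightSeries_congr (splitEquiv s i j) ?_
  rintro ⟨⟨u, hu⟩, ⟨v, hv⟩⟩
  have := wordWeight_append (v := u) hs ((isNonnegWord_singleton_true s).append hv)
  rw [List.singleton_append, wordWeight_true_cons hs hv] at this
  exact this

theorem nonnegWordSeries_eq_pow {s : ℕ} (hs : 1 ≤ s) (k : ℕ) :
    nonnegWordSeries s k = Es s ^ (k + 1) := by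
  induction k with
  | zero => rw [zero_add, pow_one, Es_eq_nonnegWordSeries]
  | succ k ih =>
    rw [pow_succ, ← ih, Es_eq_nonnegWordSeries, nonnegWordSeries_mul hs, add_zero]

open scoped Classical in
theorem wordWeight_component {t : ℕ} {w : List Bool} (hw : IsNonnegWord (t + 1) t w) :
    wordWeight (t + 1) (true :: w ++ [false]) = Finsupp.single 0 1 + (wordWeight (t + 1) w +
      if w ∈ Set.range (innerPyramidWord t) then 0 else Finsupp.single 1 1) := by
  rw [wordWeight, exteriorDownSteps_component hw, wordWeight]
  split_ifs <;> simp [Finsupp.single_add] <;> abel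

theorem weightSeries_innerPyramidWord (t : ℕ) :
    weightSeries (fun w : {w : {w // IsNonnegWord (t + 1) t w} //
      w.1 ∈ Set.range (innerPyramidWord t)} => wordWeight (t + 1) w) = (1 - X 0)⁻¹ := by
  rw [← weightSeries_single_nat]
  symm
  refine weightSeries_congr (Equiv.ofBijective
    (fun h => ⟨⟨innerPyramidWord t h, isNonnegWord_innerPyramidWord t h⟩, h, rfl⟩) ⟨?_, ?_⟩) ?_
  · intro h h' heq
    exact innerPyramidWord_injective t (congrArg (fun w => w.1.1) heq)
  · rintro ⟨w, h, hw⟩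
    exact ⟨h, Subtype.ext (Subtype.ext hw)⟩
  · intro h
    have h0 : exteriorDownSteps (t + 1) (innerPyramidWord t h) = 0 :=
      exteriorDownSteps_replicate_append_replicate (Nat.le_add_right _ _)
    change wordWeight (t + 1) (innerPyramidWord t h) = _
    rw [wordWeight, h0]
    simp [innerPyramidWord, List.count_replicate]

theorem finite_component_fiber (t : ℕ) (d : Fin 2 →₀ ℕ) :
    Finite {w : {w // IsNonnegWord (t + 1) t w} //
      wordWeight (t + 1) (true :: w ++ [false]) = d} := by
  have := finite_wordWeight_fiber (t + 1) 0 d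
  refine Finite.of_injective
    (β := {w : {w // IsNonnegWord (t + 1) 0 w} // wordWeight (t + 1) w = d})
    (fun w => ⟨⟨_, w.1.2.component⟩, w.2⟩) fun v w h => ?_
  have h := congrArg (fun u => u.1.1) h
  exact Subtype.ext (Subtype.ext (List.cons.inj (List.append_cancel_right h)).2)

theorem weightSeries_component (t : ℕ) :
    weightSeries (fun w : {w // IsNonnegWord (t + 1) t w} =>
      wordWeight (t + 1) (true :: w ++ [false])) =
      X 0 * (X 1 * Es (t + 1) ^ (t + 1) + (1 - X 1) * (1 - X 0)⁻¹) := by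
  let P : {w // IsNonnegWord (t + 1) t w} → Prop := fun w => w.1 ∈ Set.range (innerPyramidWord t)
  have hfin := finite_wordWeight_fiber (t + 1) t
  have hP : weightSeries (fun w : {w // P w} =>
      wordWeight (t + 1) (true :: w.1 ++ [false])) = X 0 * (1 - X 0)⁻¹ := by
    rw [← weightSeries_innerPyramidWord t, X,
      ← weightSeries_const_add (finite_fiber_subtype hfin P)]
    congr 1
    funext w
    rw [wordWeight_component w.1.2, if_pos w.2, add_zero]
  have hnP : weightSeries (fun w : {w // ¬ P w} =>
      wordWeight (t + 1) (true :: w.1 ++ [false])) =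
      X 0 * (X 1 * weightSeries fun w : {w // ¬ P w} => wordWeight (t + 1) w.1) := by
    rw [← mul_assoc, X, X, monomial_mul_monomial, one_mul,
      ← weightSeries_const_add (finite_fiber_subtype hfin _)]
    congr 1
    funext w
    rw [wordWeight_component w.1.2, if_neg w.2]
    abel
  have hsum := weightSeries_eq_add_compl hfin P
  have hinner := weightSeries_innerPyramidWord t
  have hpow := nonnegWordSeries_eq_pow (Nat.le_add_left 1 t) t
  rw [nonnegWordSeries] at hpow
  rw [weightSeries_eq_add_compl (finite_component_fiber t) P, hP, hnP]
  rw [hpow] at hsum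
  change weightSeries (fun w : {w // P w} => wordWeight (t + 1) w.1) = _ at hinner
  rw [hinner] at hsum
  linear_combination (- X 0 * X 1) * hsum

theorem Es_eq_one_add_mul_component (t : ℕ) :
    Es (t + 1) = 1 + Es (t + 1) * weightSeries (fun w : {w // IsNonnegWord (t + 1) t w} =>
      wordWeight (t + 1) (true :: w ++ [false])) := by
  have hs : 1 ≤ t + 1 := Nat.le_add_left 1 t
  have hE := finite_wordWeight_fiber (t + 1) 0
  have hweight : ∀ q : {w // IsNonnegWord (t + 1) 0 w} × {w // IsNonnegWord (t + 1) t w},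
      wordWeight (t + 1) (q.1.1 ++ true :: q.2.1 ++ [false]) =
        wordWeight (t + 1) q.1 + wordWeight (t + 1) (true :: q.2 ++ [false]) := fun q => by
    rw [List.append_assoc, wordWeight_append hs q.2.2.component]
  rw [Es_eq_nonnegWordSeries, nonnegWordSeries, ← weightSeries_prod hE (finite_component_fiber t),
    ← monomial_zero_one, ← weightSeries_unit, ← weightSeries_sumElim (fun d => inferInstance)]
  · refine (weightSeries_congr (lastComponentEquiv t) ?_).symm
    rintro (_ | q)
    · simp [lastComponentEquiv, wordWeight, exteriorDownSteps_nil]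
    · exact hweight q
  · intro d
    refine @Finite.of_injective _ _ (hE d) (fun q => ⟨lastComponentEquiv t (Sum.inr q.1),
      (hweight q.1).trans q.2⟩) fun p q h => ?_
    exact Subtype.ext (Sum.inr.inj ((lastComponentEquiv t).injective (Subtype.mk.inj h)))

end GeneratingFunction

open MvPowerSeries in
/-- For `s ≥ 1`, `E` satisfies `E = 1 + x·(y·E^s + (1-y)/(1-x))·E`.
Moreover `E(x,y) = P(x·y, y⁻¹)`, i.e. coefficientwise `e_{n,k} = p_{n,n-k}` for
`k ≤ n` (an `s`-ary path of length `n` with pyramid weight `k` has `n-k` exterior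
down steps). -/
theorem Es_equation (s : ℕ) (hs : 1 ≤ s) :
    (Es s = 1 + (X 0 : MvPowerSeries (Fin 2) ℚ) *
      ((X 1) * (Es s) ^ s + (1 - X 1) * (1 - X 0)⁻¹) * Es s) ∧
    ∀ n k : ℕ, k ≤ n →
      Nat.card {p : List Bool // IsSAryPath s n p ∧ exteriorDownSteps s p = k} =
        Nat.card {p : List Bool // IsSAryPath s n p ∧ pyramidWeightS s p = n - k} := by
  refine ⟨?_, fun n k hk => Nat.card_congr (Equiv.subtypeEquivRight fun p => ?_)⟩
  · obtain ⟨t, rfl⟩ : ∃ t, s = t + 1 := ⟨s - 1, by omega⟩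
    conv_lhs => rw [Es_eq_one_add_mul_component, weightSeries_component, mul_comm]
  · refine and_congr_right fun hp => ?_
    have := exteriorDownSteps_add_pyramidWeightS hs p
    have := hp.2.1
    omega
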